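/- (Symbol estimate for the interaction Hamiltonian, estimate (10.10.8.15).) Let K ⊆ U be compact, and let c, C₁ > 0 with c < C₁. Then there exist c' > 0 and, for every j ∈ ℕ, a constant C_j such that for all h ∈ (0,1], t' ≥ 0, and all (r,θ,ρ,ω) with 1 < r ≤ C₁, θ ∈ K, −C₁ ≤ ρ ≤ −c, and |ω| ≤ C₁, setting r̃ := r − 2h^{-1}t'ρ one has r̃ ≥ max(r, 2c h^{-1}t') ≥ c'(1 + h^{-1}t'), and |∂_r^j [ h^{-2}ρ² − p(r − 2h^{-1}t'ρ, θ, h^{-1}ρ, h^{-1}ω) ]| ≤ C_j h^{-2} (1 + h^{-1}t')^{-1-μ-j}. -/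

import Mathlib

open Real Set Filter Topology

namespace Scattering

/-- The Euclidean norm of a vector in `Fin m → ℝ`. -/
noncomputable def eNorm {m : ℕ} (v : Fin m → ℝ) : ℝ := Real.sqrt (∑ j, v j ^ 2)

/-- Partial derivative in the radial variable of a function of `(r, θ)`. -/
noncomputable def pderivR {m : ℕ} (f : ℝ → (Fin m → ℝ) → ℝ) : ℝ → (Fin m → ℝ) → ℝ :=
  fun r θ => deriv (fun s => f s θ) r

/-- Partial derivative in the `j`-th angular variable of a function of `(r, θ)`. -/
noncomputable def pderivTheta {m : ℕ} (j : Fin m) (f : ℝ → (Fin m → ℝ) → ℝ) :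
    ℝ → (Fin m → ℝ) → ℝ :=
  fun r θ => fderiv ℝ (f r) θ (Pi.single j 1)

/-- Iterated angular derivatives `∂_θ^α` for a multi-index `α` (a list of directions). -/
noncomputable def thetaDerivs {m : ℕ} (α : List (Fin m)) (f : ℝ → (Fin m → ℝ) → ℝ) :
    ℝ → (Fin m → ℝ) → ℝ :=
  α.foldr pderivTheta f

/-- `DecayOn f ν S K` : for all `k, α` there is `C > 0` with
`|∂_r^k ∂_θ^α f(r,θ)| ≤ C r^{-ν-k}` for `r ∈ (S,∞)`, `θ ∈ K`. -/
def DecayOn {m : ℕ} (f : ℝ → (Fin m → ℝ) → ℝ) (ν S : ℝ) (K : Set (Fin m → ℝ)) : Prop :=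
  ∀ (k : ℕ) (α : List (Fin m)), ∃ C > 0, ∀ r ∈ Ioi S, ∀ θ ∈ K,
    |(pderivR (m := m))^[k] (thetaDerivs α f) r θ| ≤ C * r ^ (-ν - (k : ℝ))

/-- The classical kinetic energy function
`p(r,θ,ρ,ω) = ρ² + r⁻²Σ h^{jk} ω_j ω_k + a₀ ρ² + r⁻¹ Σ a₁^j ρ ω_j + r⁻² Σ a₂^{jk} ω_j ω_k`. -/
noncomputable def energy {m : ℕ} (hM : (Fin m → ℝ) → Matrix (Fin m) (Fin m) ℝ)
    (a0 : ℝ → (Fin m → ℝ) → ℝ) (a1 : ℝ → (Fin m → ℝ) → Fin m → ℝ)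
    (a2 : ℝ → (Fin m → ℝ) → Matrix (Fin m) (Fin m) ℝ) :
    ℝ → (Fin m → ℝ) → ℝ → (Fin m → ℝ) → ℝ :=
  fun r θ ρ ω =>
    ρ ^ 2 + (∑ j, ∑ k, hM θ j k * ω j * ω k) / r ^ 2 + a0 r θ * ρ ^ 2
      + (∑ j, a1 r θ j * ρ * ω j) / r + (∑ j, ∑ k, a2 r θ j k * ω j * ω k) / r ^ 2

section PhaseDerivs

variable {m : ℕ} (p : ℝ → (Fin m → ℝ) → ℝ → (Fin m → ℝ) → ℝ)

/-- `∂p/∂r`. -/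
noncomputable def pdR (r : ℝ) (θ : Fin m → ℝ) (ρ : ℝ) (ω : Fin m → ℝ) : ℝ :=
  deriv (fun s => p s θ ρ ω) r

/-- `∂p/∂θ_j`. -/
noncomputable def pdTheta (j : Fin m) (r : ℝ) (θ : Fin m → ℝ) (ρ : ℝ) (ω : Fin m → ℝ) : ℝ :=
  fderiv ℝ (fun θ' => p r θ' ρ ω) θ (Pi.single j 1)

/-- `∂p/∂ρ`. -/
noncomputable def pdRho (r : ℝ) (θ : Fin m → ℝ) (ρ : ℝ) (ω : Fin m → ℝ) : ℝ :=
  deriv (fun s => p r θ s ω) ρ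

/-- `∂p/∂ω_j`. -/
noncomputable def pdOmega (j : Fin m) (r : ℝ) (θ : Fin m → ℝ) (ρ : ℝ) (ω : Fin m → ℝ) : ℝ :=
  fderiv ℝ (fun ω' => p r θ ρ ω') ω (Pi.single j 1)

/-- `(r,θ,ρ,ω)` solves the Hamiltonian system
`ṙ = ∂p/∂ρ, θ̇ = ∂p/∂ω, ρ̇ = -∂p/∂r, ω̇ = -∂p/∂θ` on the set `I` of times. -/
def IsHamSolOn (r : ℝ → ℝ) (θ : ℝ → Fin m → ℝ) (ρ : ℝ → ℝ) (ω : ℝ → Fin m → ℝ)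
    (I : Set ℝ) : Prop :=
  ∀ t ∈ I,
    HasDerivAt r (pdRho p (r t) (θ t) (ρ t) (ω t)) t ∧
    (∀ j, HasDerivAt (fun s => θ s j) (pdOmega p j (r t) (θ t) (ρ t) (ω t)) t) ∧
    HasDerivAt ρ (-pdR p (r t) (θ t) (ρ t) (ω t)) t ∧
    (∀ j, HasDerivAt (fun s => ω s j) (-pdTheta p j (r t) (θ t) (ρ t) (ω t)) t)

/-- The interaction-picture (time-dependent) Hamiltonian `K(t,R,θ,ρ,ω) = ρ² - p(R+2tρ,θ,ρ,ω)`. -/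
noncomputable def Kint (t R : ℝ) (θ : Fin m → ℝ) (ρ : ℝ) (ω : Fin m → ℝ) : ℝ :=
  ρ ^ 2 - p (R + 2 * t * ρ) θ ρ ω

/-- `∂K/∂R`. -/
noncomputable def KdR (t R : ℝ) (θ : Fin m → ℝ) (ρ : ℝ) (ω : Fin m → ℝ) : ℝ :=
  deriv (fun x => Kint p t x θ ρ ω) R

/-- `∂K/∂θ_j`. -/
noncomputable def KdTheta (j : Fin m) (t R : ℝ) (θ : Fin m → ℝ) (ρ : ℝ) (ω : Fin m → ℝ) : ℝ :=
  fderiv ℝ (fun θ' => Kint p t R θ' ρ ω) θ (Pi.single j 1)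

/-- `∂K/∂ρ`. -/
noncomputable def KdRho (t R : ℝ) (θ : Fin m → ℝ) (ρ : ℝ) (ω : Fin m → ℝ) : ℝ :=
  deriv (fun x => Kint p t R θ x ω) ρ

/-- `∂K/∂ω_j`. -/
noncomputable def KdOmega (j : Fin m) (t R : ℝ) (θ : Fin m → ℝ) (ρ : ℝ) (ω : Fin m → ℝ) : ℝ :=
  fderiv ℝ (fun ω' => Kint p t R θ ρ ω') ω (Pi.single j 1)

end PhaseDerivs

/-- The phase space `ℝ × ℝ^m × ℝ × ℝ^m` with coordinates `(R, θ, ρ, ω)`. -/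
abbrev Phase (m : ℕ) : Type := ℝ × (Fin m → ℝ) × ℝ × (Fin m → ℝ)

/-- A curve `f = (R,θ,ρ,ω)` solves the interaction-picture Hamiltonian system
`Ṙ = ∂K/∂ρ, θ̇ = ∂K/∂ω, ρ̇ = -∂K/∂R, ω̇ = -∂K/∂θ` on the set `I` of times. -/
def IsIntSolOn {m : ℕ} (p : ℝ → (Fin m → ℝ) → ℝ → (Fin m → ℝ) → ℝ)
    (f : ℝ → Phase m) (I : Set ℝ) : Prop :=
  ∀ t ∈ I,
    HasDerivAt (fun s => (f s).1) (KdRho p t (f t).1 (f t).2.1 (f t).2.2.1 (f t).2.2.2) t ∧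
    (∀ j, HasDerivAt (fun s => (f s).2.1 j)
      (KdOmega p j t (f t).1 (f t).2.1 (f t).2.2.1 (f t).2.2.2) t) ∧
    HasDerivAt (fun s => (f s).2.2.1)
      (-(KdR p t (f t).1 (f t).2.1 (f t).2.2.1 (f t).2.2.2)) t ∧
    (∀ j, HasDerivAt (fun s => (f s).2.2.2 j)
      (-(KdTheta p j t (f t).1 (f t).2.1 (f t).2.2.1 (f t).2.2.2)) t)

/-- The data of a scattering metric of short-range type on the end `(1,∞) × U`:
the boundary metric `h` (smooth, symmetric, positive definite) and the coefficients
`a₀, a₁, a₂` of the kinetic energy, smooth on `(1,∞) × U` with the short-range decay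
`|∂_r^k ∂_θ^α a₀| ≤ C r^{-1-μ-k}`, `|∂_r^k ∂_θ^α a₁| ≤ C r^{-μ-k}`,
`|∂_r^k ∂_θ^α a₂| ≤ C r^{-μ-k}` on `(1,∞) × K` for every compact `K ⊆ U`. -/
structure Coeffs (m : ℕ) (μ : ℝ) (U : Set (Fin m → ℝ)) where
  hM : (Fin m → ℝ) → Matrix (Fin m) (Fin m) ℝ
  a0 : ℝ → (Fin m → ℝ) → ℝ
  a1 : ℝ → (Fin m → ℝ) → Fin m → ℝ
  a2 : ℝ → (Fin m → ℝ) → Matrix (Fin m) (Fin m) ℝ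
  hM_smooth : ∀ j k, ContDiffOn ℝ (⊤ : ℕ∞) (fun θ => hM θ j k) U
  hM_symm : ∀ θ ∈ U, (hM θ).IsSymm
  hM_posdef : ∀ θ ∈ U, (hM θ).PosDef
  a0_smooth : ContDiffOn ℝ (⊤ : ℕ∞) (fun z : ℝ × (Fin m → ℝ) => a0 z.1 z.2) (Ioi (1:ℝ) ×ˢ U)
  a1_smooth : ∀ j, ContDiffOn ℝ (⊤ : ℕ∞) (fun z : ℝ × (Fin m → ℝ) => a1 z.1 z.2 j) (Ioi (1:ℝ) ×ˢ U)
  a2_smooth : ∀ j k, ContDiffOn ℝ (⊤ : ℕ∞) (fun z : ℝ × (Fin m → ℝ) => a2 z.1 z.2 j k) (Ioi (1:ℝ) ×ˢ U)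
  a2_symm : ∀ r θ j k, a2 r θ j k = a2 r θ k j
  a0_decay : ∀ K : Set (Fin m → ℝ), IsCompact K → K ⊆ U → DecayOn a0 (1 + μ) 1 K
  a1_decay : ∀ K : Set (Fin m → ℝ), IsCompact K → K ⊆ U →
    ∀ j, DecayOn (fun r θ => a1 r θ j) μ 1 K
  a2_decay : ∀ K : Set (Fin m → ℝ), IsCompact K → K ⊆ U →
    ∀ j k, DecayOn (fun r θ => a2 r θ j k) μ 1 K

/-- The kinetic energy function associated to the data `c`. -/
noncomputable def Coeffs.p {m : ℕ} {μ : ℝ} {U : Set (Fin m → ℝ)} (c : Coeffs m μ U) :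
    ℝ → (Fin m → ℝ) → ℝ → (Fin m → ℝ) → ℝ :=
  energy c.hM c.a0 c.a1 c.a2

/-!
After the substitution `ρ ↦ h⁻¹ρ`, `ω ↦ h⁻¹ω` the energy, being quadratic in `(ρ, ω)`, scales by
`h⁻²`, so only the `r`-decay of `p - ρ²` at `r̃ = r - 2h⁻¹t'ρ` matters. In the sense of uniform
symbols on `(1, ∞)`, the terms of `p - ρ²` have orders `-2`, `-1-μ`, `-μ-1` and `-μ-2`, all at most
`-1-μ`. Since `-ρ` is bounded below, `r̃` dominates `1 + h⁻¹t'`, and negative powers of `r̃` turn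
into negative powers of `1 + h⁻¹t'`.
-/

/-- A family `f a`, `a ∈ A`, of symbols of order `s` on the half-line `(S, ∞)`, uniformly in the
parameter: `|∂_x^k f a x| ≤ C_k x^{s-k}` with `C_k` independent of `a`. The order is the exponent
of growth, so that `DecayOn f ν S K` corresponds to the order `-ν`. -/
structure IsSymbolOn {X : Type*} (s S : ℝ) (A : Set X) (f : X → ℝ → ℝ) : Prop where
  contDiffOn : ∀ a ∈ A, ContDiffOn ℝ (⊤ : ℕ∞) (f a) (Ioi S)
  bound : ∀ k : ℕ, ∃ C > 0, ∀ a ∈ A, ∀ x ∈ Ioi S, |iteratedDeriv k (f a) x| ≤ C * x ^ (s - k)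

namespace IsSymbolOn

variable {X Y : Type*} {s t S : ℝ} {A : Set X} {B : Set Y} {f g : X → ℝ → ℝ}

theorem contDiffAt (hf : IsSymbolOn s S A f) {a : X} (ha : a ∈ A) {x : ℝ} (hx : x ∈ Ioi S)
    (k : ℕ) : ContDiffAt ℝ k (f a) x :=
  ((hf.contDiffOn a ha).contDiffAt (Ioi_mem_nhds hx)).of_le (mod_cast le_top)

theorem comp (hf : IsSymbolOn s S A f) {φ : Y → X} (hφ : MapsTo φ B A) :
    IsSymbolOn s S B (fun b => f (φ b)) where
  contDiffOn b hb := hf.contDiffOn (φ b) (hφ hb)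
  bound k := (hf.bound k).imp fun _ hC => ⟨hC.1, fun b hb => hC.2 (φ b) (hφ hb)⟩

theorem mono (hf : IsSymbolOn s S A f) (hS : 1 ≤ S) (hst : s ≤ t) : IsSymbolOn t S A f where
  contDiffOn := hf.contDiffOn
  bound k := by
    obtain ⟨C, hC, hfC⟩ := hf.bound k
    refine ⟨C, hC, fun a ha x hx => (hfC a ha x hx).trans ?_⟩
    have hx1 : 1 ≤ x := hS.trans (mem_Ioi.1 hx).le
    gcongr

theorem zero (hS : 0 ≤ S) : IsSymbolOn s S A 0 where
  contDiffOn _ _ := contDiffOn_const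
  bound k := ⟨1, one_pos, fun a _ x hx => by
    have hx0 : 0 < x := hS.trans_lt hx
    have hzero : iteratedDeriv k ((0 : X → ℝ → ℝ) a) x = 0 := by simp [Pi.zero_def]
    rw [hzero, abs_zero]
    positivity⟩

theorem const (hS : 0 ≤ S) {b : X → ℝ} {M : ℝ} (hb : ∀ a ∈ A, |b a| ≤ M) :
    IsSymbolOn 0 S A (fun a _ => b a) where
  contDiffOn _ _ := contDiffOn_const
  bound k := ⟨|M| + 1, by positivity, fun a ha x hx => by
    have hx0 : 0 < x := hS.trans_lt hx
    rw [iteratedDeriv_const]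
    split_ifs with hk
    · subst hk
      simpa using (hb a ha).trans ((le_abs_self M).trans (le_add_of_nonneg_right zero_le_one))
    · rw [abs_zero]
      positivity⟩

theorem zpow (hS : 0 ≤ S) (n : ℤ) : IsSymbolOn n S A (fun _ x => x ^ n) where
  contDiffOn _ _ _ hx := (analyticAt_id.zpow (hS.trans_lt hx).ne').contDiffAt.contDiffWithinAt
  bound k := by
    refine ⟨|∏ i ∈ Finset.range k, ((n : ℝ) - i)| + 1, by positivity, fun _ _ x hx => ?_⟩
    have hx0 : 0 < x := hS.trans_lt hx
    rw [iteratedDeriv_eq_iterate, iter_deriv_zpow, abs_mul, abs_of_pos (zpow_pos hx0 _),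
      ← Real.rpow_intCast]
    push_cast
    gcongr
    exact le_add_of_nonneg_right zero_le_one

theorem add (hf : IsSymbolOn s S A f) (hg : IsSymbolOn s S A g) : IsSymbolOn s S A (f + g) where
  contDiffOn a ha := (hf.contDiffOn a ha).add (hg.contDiffOn a ha)
  bound k := by
    obtain ⟨C, hC, hfC⟩ := hf.bound k
    obtain ⟨D, hD, hgD⟩ := hg.bound k
    refine ⟨C + D, add_pos hC hD, fun a ha x hx => ?_⟩
    rw [Pi.add_apply, iteratedDeriv_add (hf.contDiffAt ha hx k) (hg.contDiffAt ha hx k), add_mul]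
    exact (abs_add_le _ _).trans (add_le_add (hfC a ha x hx) (hgD a ha x hx))

theorem sum {ι : Type*} (hS : 0 ≤ S) (u : Finset ι) {F : ι → X → ℝ → ℝ}
    (hF : ∀ i ∈ u, IsSymbolOn s S A (F i)) : IsSymbolOn s S A (fun a x => ∑ i ∈ u, F i a x) := by
  have hsum : IsSymbolOn s S A (∑ i ∈ u, F i) :=
    Finset.sum_induction F (IsSymbolOn s S A) (fun _ _ => add) (zero hS) hF
  convert hsum using 3
  simp only [Finset.sum_apply]

theorem mul (hS : 0 ≤ S) (hf : IsSymbolOn s S A f) (hg : IsSymbolOn t S A g) :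
    IsSymbolOn (s + t) S A (f * g) where
  contDiffOn a ha := (hf.contDiffOn a ha).mul (hg.contDiffOn a ha)
  bound k := by
    choose C hC hfC using hf.bound
    choose D hD hgD using hg.bound
    refine ⟨∑ l ∈ Finset.range (k + 1), k.choose l * C l * D (k - l),
      Finset.sum_pos (fun l hl => ?_) Finset.nonempty_range_add_one, fun a ha x hx => ?_⟩
    · have hchoose := Nat.choose_pos (Finset.mem_range_succ_iff.1 hl)
      have := hC l
      have := hD (k - l)
      positivity
    have hx0 : 0 < x := hS.trans_lt hx
    rw [Pi.mul_apply, iteratedDeriv_mul (hf.contDiffAt ha hx k) (hg.contDiffAt ha hx k),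
      Finset.sum_mul]
    refine (Finset.abs_sum_le_sum_abs _ _).trans (Finset.sum_le_sum fun l hl => ?_)
    have hexp : x ^ (s + t - k) = x ^ (s - l) * x ^ (t - (k - l : ℕ)) := by
      rw [← Real.rpow_add hx0, Nat.cast_sub (Finset.mem_range_succ_iff.1 hl)]
      congr 1
      ring
    have := hC l
    calc |k.choose l * iteratedDeriv l (f a) x * iteratedDeriv (k - l) (g a) x|
        = k.choose l * |iteratedDeriv l (f a) x| * |iteratedDeriv (k - l) (g a) x| := by
          rw [abs_mul, abs_mul, Nat.abs_cast]
      _ ≤ k.choose l * (C l * x ^ (s - l)) * (D (k - l) * x ^ (t - (k - l : ℕ))) := by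
          gcongr
          exacts [hfC l a ha x hx, hgD (k - l) a ha x hx]
      _ = k.choose l * C l * D (k - l) * x ^ (s + t - k) := by
          rw [hexp]
          ring

theorem mul_const (hS : 0 ≤ S) (hf : IsSymbolOn s S A f) {b : X → ℝ} {M : ℝ}
    (hb : ∀ a ∈ A, |b a| ≤ M) : IsSymbolOn s S A (fun a x => f a x * b a) :=
  add_zero s ▸ hf.mul hS (const hS hb)

theorem div_pow (hS : 0 ≤ S) (hf : IsSymbolOn s S A f) (n : ℕ) :
    IsSymbolOn (s - n) S A (fun a x => f a x / x ^ n) := by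
  have hmul := hf.mul hS (zpow hS (-n : ℤ))
  convert hmul using 3
  · push_cast
    ring
  · simp only [Pi.mul_apply, zpow_neg, zpow_natCast, div_eq_mul_inv]

theorem exists_bound_of_mul_le (hf : IsSymbolOn s S A f) (hs : s ≤ 0) {δ : ℝ} (hδ : 0 < δ)
    (k : ℕ) : ∃ C > 0, ∀ a ∈ A, ∀ x ∈ Ioi S, ∀ y > 0, δ * y ≤ x →
      |iteratedDeriv k (f a) x| ≤ C * y ^ (s - k) := by
  obtain ⟨C, hC, hfC⟩ := hf.bound k
  refine ⟨C * δ ^ (s - k), by positivity, fun a ha x hx y hy hyx => ?_⟩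
  calc |iteratedDeriv k (f a) x| ≤ C * x ^ (s - k) := hfC a ha x hx
    _ ≤ C * (δ * y) ^ (s - k) := by
        gcongr 1
        exact Real.rpow_le_rpow_of_nonpos (by positivity) hyx
          (sub_nonpos.2 (hs.trans k.cast_nonneg))
    _ = C * δ ^ (s - k) * y ^ (s - k) := by rw [Real.mul_rpow hδ.le hy.le, mul_assoc]

end IsSymbolOn

section Coefficients

variable {m : ℕ}

theorem iterate_pderivR_apply (k : ℕ) (f : ℝ → (Fin m → ℝ) → ℝ) (r : ℝ) (θ : Fin m → ℝ) :
    pderivR^[k] f r θ = iteratedDeriv k (fun s => f s θ) r := by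
  rw [iteratedDeriv_eq_iterate]
  induction k generalizing f with
  | zero => rfl
  | succ k ih =>
    rw [Function.iterate_succ_apply, Function.iterate_succ_apply, ih]
    rfl

theorem DecayOn.isSymbolOn {f : ℝ → (Fin m → ℝ) → ℝ} {ν S : ℝ} {U K : Set (Fin m → ℝ)}
    (hf : DecayOn f ν S K)
    (hf_smooth : ContDiffOn ℝ (⊤ : ℕ∞) (fun z : ℝ × (Fin m → ℝ) => f z.1 z.2) (Ioi S ×ˢ U))
    (hKU : K ⊆ U) : IsSymbolOn (-ν) S K (fun θ x => f x θ) where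
  contDiffOn θ hθ := hf_smooth.comp (f := fun x : ℝ => (x, θ))
    (contDiff_id.prodMk contDiff_const).contDiffOn fun _ hx => ⟨hx, hKU hθ⟩
  bound k := by
    obtain ⟨C, hC, hfC⟩ := hf k []
    refine ⟨C, hC, fun θ hθ x hx => ?_⟩
    rw [← iterate_pderivR_apply]
    exact hfC x hx θ hθ

theorem abs_le_eNorm (v : Fin m → ℝ) (j : Fin m) : |v j| ≤ eNorm v :=
  Real.abs_le_sqrt (Finset.single_le_sum (f := fun i => v i ^ 2) (fun i _ => sq_nonneg (v i))
    (Finset.mem_univ j))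

section Energy

variable {hM : (Fin m → ℝ) → Matrix (Fin m) (Fin m) ℝ} {a0 : ℝ → (Fin m → ℝ) → ℝ}
  {a1 : ℝ → (Fin m → ℝ) → Fin m → ℝ} {a2 : ℝ → (Fin m → ℝ) → Matrix (Fin m) (Fin m) ℝ}

theorem energy_smul (b r : ℝ) (θ : Fin m → ℝ) (ρ : ℝ) (ω : Fin m → ℝ) :
    energy hM a0 a1 a2 r θ (b * ρ) (b • ω) = b ^ 2 * energy hM a0 a1 a2 r θ ρ ω := by
  have hquad (M : Matrix (Fin m) (Fin m) ℝ) : ∑ j, ∑ k, M j k * (b * ω j) * (b * ω k)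
      = b ^ 2 * ∑ j, ∑ k, M j k * ω j * ω k := by
    simp only [Finset.mul_sum]
    exact Finset.sum_congr rfl fun j _ => Finset.sum_congr rfl fun k _ => by ring
  have hlin : ∑ j, a1 r θ j * (b * ρ) * (b * ω j) = b ^ 2 * ∑ j, a1 r θ j * ρ * ω j := by
    rw [Finset.mul_sum]
    exact Finset.sum_congr rfl fun j _ => by ring
  simp only [energy, Pi.smul_apply, smul_eq_mul, hquad, hlin]
  ring

theorem isSymbolOn_sum_mul_mul {s S C : ℝ} (hS : 0 ≤ S) {K : Set (Fin m → ℝ)}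
    {q : ℝ → (Fin m → ℝ) → Matrix (Fin m) (Fin m) ℝ}
    (hq : ∀ j k, IsSymbolOn s S K (fun θ x => q x θ j k)) :
    IsSymbolOn s S (K ×ˢ Icc (-C) C ×ˢ {ω | eNorm ω ≤ C})
      (fun z x => ∑ j, ∑ k, q x z.1 j k * z.2.2 j * z.2.2 k) :=
  .sum hS _ fun j _ => .sum hS _ fun k _ =>
    ((((hq j k).comp fun _ hz => hz.1).mul_const hS
      fun z hz => (abs_le_eNorm z.2.2 j).trans hz.2.2).mul_const hS
      fun z hz => (abs_le_eNorm z.2.2 k).trans hz.2.2)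

theorem isSymbolOn_energy_sub_sq {μ S C : ℝ} (hμ : μ ≤ 1) (hS : 1 ≤ S) {K : Set (Fin m → ℝ)}
    (hhM : ∀ j k, IsSymbolOn 0 S K (fun θ _ => hM θ j k))
    (ha0 : IsSymbolOn (-1 - μ) S K (fun θ x => a0 x θ))
    (ha1 : ∀ j, IsSymbolOn (-μ) S K (fun θ x => a1 x θ j))
    (ha2 : ∀ j k, IsSymbolOn (-μ) S K (fun θ x => a2 x θ j k)) :
    IsSymbolOn (-1 - μ) S (K ×ˢ Icc (-C) C ×ˢ {ω | eNorm ω ≤ C})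
      (fun z x => energy hM a0 a1 a2 x z.1 z.2.1 z.2.2 - z.2.1 ^ 2) := by
  set A := K ×ˢ Icc (-C) C ×ˢ {ω : Fin m → ℝ | eNorm ω ≤ C}
  have hS0 : 0 ≤ S := zero_le_one.trans hS
  have hfst : MapsTo Prod.fst A K := fun _ hz => hz.1
  have hρ : ∀ z ∈ A, |z.2.1| ≤ C := fun z hz => abs_le.2 hz.2.1
  have hω : ∀ j, ∀ z ∈ A, |z.2.2 j| ≤ C := fun j z hz => (abs_le_eNorm z.2.2 j).trans hz.2.2
  have hM_term := ((isSymbolOn_sum_mul_mul (C := C) (q := fun _ => hM) hS0 hhM).div_pow hS0 2).mono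
    hS (show (0 : ℝ) - (2 : ℕ) ≤ -1 - μ by push_cast; linarith)
  have a0_term : IsSymbolOn (-1 - μ) S A (fun z x => a0 x z.1 * z.2.1 ^ 2) := by
    simpa only [sq, mul_assoc] using ((ha0.comp hfst).mul_const hS0 hρ).mul_const hS0 hρ
  have a1_term := ((IsSymbolOn.sum hS0 Finset.univ fun j _ =>
    (((ha1 j).comp hfst).mul_const hS0 hρ).mul_const hS0 (hω j)).div_pow hS0 1).mono
    hS (show -μ - (1 : ℕ) ≤ -1 - μ by push_cast; linarith)
  have a2_term := ((isSymbolOn_sum_mul_mul (C := C) hS0 ha2).div_pow hS0 2).mono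
    hS (show -μ - (2 : ℕ) ≤ -1 - μ by push_cast; linarith)
  convert ((hM_term.add a0_term).add a1_term).add a2_term using 3
  simp only [energy, Pi.add_apply, pow_one]
  ring

end Energy

namespace Coeffs

variable {μ : ℝ} {U K : Set (Fin m → ℝ)} (c : Coeffs m μ U)

theorem isSymbolOn_hM (hK : IsCompact K) (hKU : K ⊆ U) (j k : Fin m) :
    IsSymbolOn 0 1 K (fun θ _ => c.hM θ j k) := by
  obtain ⟨M, hM⟩ := hK.exists_bound_of_continuousOn ((c.hM_smooth j k).continuousOn.mono hKU)
  exact .const zero_le_one hM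

theorem isSymbolOn_p_sub_sq (hμ : μ ≤ 1) (hK : IsCompact K) (hKU : K ⊆ U) (C : ℝ) :
    IsSymbolOn (-1 - μ) 1 (K ×ˢ Icc (-C) C ×ˢ {ω | eNorm ω ≤ C})
      (fun z x => c.p x z.1 z.2.1 z.2.2 - z.2.1 ^ 2) :=
  isSymbolOn_energy_sub_sq hμ le_rfl (c.isSymbolOn_hM hK hKU)
    (neg_add' 1 μ ▸ (c.a0_decay K hK hKU).isSymbolOn c.a0_smooth hKU)
    (fun j => (c.a1_decay K hK hKU j).isSymbolOn (c.a1_smooth j) hKU)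
    (fun j k => (c.a2_decay K hK hKU j k).isSymbolOn (c.a2_smooth j k) hKU)

theorem abs_iterate_deriv_interaction (j : ℕ) (h b r : ℝ) (θ : Fin m → ℝ) (ρ : ℝ)
    (ω : Fin m → ℝ) :
    |deriv^[j] (fun x => (h ^ 2)⁻¹ * ρ ^ 2 - c.p (x - b) θ (h⁻¹ * ρ) (h⁻¹ • ω)) r|
      = (h ^ 2)⁻¹ * |iteratedDeriv j (fun x => c.p x θ ρ ω - ρ ^ 2) (r - b)| := by
  have hscale : (fun x => (h ^ 2)⁻¹ * ρ ^ 2 - c.p (x - b) θ (h⁻¹ * ρ) (h⁻¹ • ω))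
      = fun x => -(h ^ 2)⁻¹ * (fun y => c.p y θ ρ ω - ρ ^ 2) (x - b) := by
    funext x
    simp only [Coeffs.p, energy_smul, inv_pow]
    ring
  rw [hscale, ← iteratedDeriv_eq_iterate, iteratedDeriv_const_mul_field,
    iteratedDeriv_comp_sub_const j (fun y => c.p y θ ρ ω - ρ ^ 2) b, abs_mul, abs_neg,
    abs_of_nonneg (by positivity)]

end Coeffs

end Coefficients

theorem max_le_sub_two_mul {r cl T ρ : ℝ} (hr : 0 ≤ r) (hcl : 0 ≤ cl) (hT : 0 ≤ T)
    (hρ : ρ ≤ -cl) : max r (2 * cl * T) ≤ r - 2 * T * ρ := by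
  have hTρ : cl * T ≤ -ρ * T := by gcongr; linarith
  have hclT : 0 ≤ cl * T := by positivity
  exact max_le (by linarith) (by linarith)

theorem min_mul_one_add_le_max {r cl T : ℝ} (hr : 1 ≤ r) (hT : 0 ≤ T) :
    min (1 / 2) cl * (1 + T) ≤ max r (2 * cl * T) := by
  have hclT : min (1 / 2) cl * T ≤ cl * T := by gcongr; exact min_le_right _ _
  linarith [min_le_left (1 / 2) cl, le_max_left r (2 * cl * T), le_max_right r (2 * cl * T)]

theorem statement_18_general {m : ℕ} {μ : ℝ} (hμ : μ ∈ Icc (-1 : ℝ) 1)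
    {U : Set (Fin m → ℝ)} (c : Coeffs m μ U) {K : Set (Fin m → ℝ)} (hK : IsCompact K)
    (hKU : K ⊆ U) {cl : ℝ} (hcl : 0 < cl) (C₁ : ℝ) :
    ∃ c' > (0 : ℝ), ∀ j : ℕ, ∃ Cj > (0 : ℝ), ∀ h > (0 : ℝ), ∀ t' ≥ (0 : ℝ),
      ∀ (r : ℝ) (θ : Fin m → ℝ) (ρ : ℝ) (ω : Fin m → ℝ),
        1 < r → θ ∈ K → -C₁ ≤ ρ → ρ ≤ -cl → eNorm ω ≤ C₁ →
        (r - 2 * h⁻¹ * t' * ρ ≥ max r (2 * cl * h⁻¹ * t') ∧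
         max r (2 * cl * h⁻¹ * t') ≥ c' * (1 + h⁻¹ * t') ∧
         |deriv^[j]
            (fun x => (h ^ 2)⁻¹ * ρ ^ 2
              - c.p (x - 2 * h⁻¹ * t' * ρ) θ (h⁻¹ * ρ) (h⁻¹ • ω)) r|
           ≤ Cj * (h ^ 2)⁻¹ * (1 + h⁻¹ * t') ^ (-(1 : ℝ) - μ - (j : ℝ))) := by
  have hc' : 0 < min (1 / 2) cl := by positivity
  refine ⟨min (1 / 2) cl, hc', fun j => ?_⟩
  obtain ⟨C, hC, hbound⟩ := (c.isSymbolOn_p_sub_sq hμ.2 hK hKU C₁).exists_bound_of_mul_le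
    (by linarith [hμ.1]) hc' j
  refine ⟨C, hC, fun h hh t' ht' r θ ρ ω hr hθ hρ₁ hρ₂ hω => ?_⟩
  have hT : 0 ≤ h⁻¹ * t' := by positivity
  rw [mul_assoc 2 h⁻¹ t', mul_assoc (2 * cl) h⁻¹ t', c.abs_iterate_deriv_interaction]
  have hshift := max_le_sub_two_mul (zero_le_one.trans hr.le) hcl.le hT hρ₂
  have hmax := min_mul_one_add_le_max (cl := cl) hr.le hT
  refine ⟨hshift, hmax, ?_⟩
  have hρC : ρ ∈ Icc (-C₁) C₁ := ⟨hρ₁, by linarith⟩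
  have hx : 1 < r - 2 * (h⁻¹ * t') * ρ := hr.trans_le ((le_max_left _ _).trans hshift)
  rw [mul_comm C, mul_assoc (h ^ 2)⁻¹]
  gcongr
  exact hbound (θ, ρ, ω) ⟨hθ, hρC, hω⟩ _ hx _ (by positivity) (hmax.trans hshift)

/-- Symbol estimate for the interaction Hamiltonian, estimate
(10.10.8.15): on the support region, with `r̃ = r - 2h⁻¹t'ρ ≥ c'(1 + h⁻¹t')`,
`|∂_r^j [h⁻²ρ² - p(r - 2h⁻¹t'ρ, θ, h⁻¹ρ, h⁻¹ω)]| ≤ C_j h⁻² (1 + h⁻¹t')^{-1-μ-j}`. -/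
theorem statement_18 {m : ℕ} (hm : 1 ≤ m) {μ : ℝ} (hμ : μ ∈ Ioo (0:ℝ) 1)
    {U : Set (Fin m → ℝ)} (hU : IsOpen U) (c : Coeffs m μ U)
    (K : Set (Fin m → ℝ)) (hK : IsCompact K) (hKU : K ⊆ U)
    (cl C₁ : ℝ) (hcl : 0 < cl) (hclC : cl < C₁) :
    ∃ c' > (0:ℝ), ∀ j : ℕ, ∃ Cj > (0:ℝ), ∀ h ∈ Ioc (0:ℝ) 1, ∀ t' ≥ (0:ℝ),
      ∀ (r : ℝ) (θ : Fin m → ℝ) (ρ : ℝ) (ω : Fin m → ℝ),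
        1 < r → r ≤ C₁ → θ ∈ K → -C₁ ≤ ρ → ρ ≤ -cl → eNorm ω ≤ C₁ →
        (r - 2 * h⁻¹ * t' * ρ ≥ max r (2 * cl * h⁻¹ * t') ∧
         max r (2 * cl * h⁻¹ * t') ≥ c' * (1 + h⁻¹ * t') ∧
         |deriv^[j]
            (fun x => (h ^ 2)⁻¹ * ρ ^ 2
              - c.p (x - 2 * h⁻¹ * t' * ρ) θ (h⁻¹ * ρ) (h⁻¹ • ω)) r|
           ≤ Cj * (h ^ 2)⁻¹ * (1 + h⁻¹ * t') ^ (-(1:ℝ) - μ - (j : ℝ))) := by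
  obtain ⟨c', hc', hbound⟩ := statement_18_general ⟨by linarith [hμ.1], hμ.2.le⟩ c hK hKU hcl C₁
  exact ⟨c', hc', fun j => (hbound j).imp fun _ ⟨hCj, H⟩ =>
    ⟨hCj, fun h hh t' ht' r θ ρ ω hr _ => H h hh.1 t' ht' r θ ρ ω hr⟩⟩

end Scattering
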